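/- Let l_1,…,l_n and r_1,…,r_n be d-dimensional bit vectors and let ℓ ≥ 1, p ∈ {0,1}, q ≥ 0 be integers. If no pair l_i, r_j is orthogonal, then the diameter of G = G_{L,R,ℓ,p,q} equals 4ℓ − 2p + q. -/

import Mathlib

namespace GraphOV

/-- Two bit vectors (functions into `Fin 2`) are orthogonal if in every coordinate
at least one of them is `0`. -/
def Orth {d : ℕ} (a b : Fin d → Fin 2) : Prop := ∀ k, a k = 0 ∨ b k = 0

/-- A system of internally disjoint paths joining exterior vertices from `E`:
for each path name `i : ι` we record its two endpoints and its length. -/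
structure PathSys (E : Type) (ι : Type) where
  src : ι → E
  dst : ι → E
  len : ι → ℕ

namespace PathSys

variable {E ι : Type}

/-- Endpoints of zero-length paths get identified. -/
def idRel (S : PathSys E ι) (a b : E) : Prop :=
  ∃ i, S.len i = 0 ∧ S.src i = a ∧ S.dst i = b

/-- Vertices of the glued graph: exterior vertices (up to identification) together
with, for each path of length `m`, fresh interior vertices at positions `1,…,m-1`. -/
def Vert (S : PathSys E ι) : Type :=
  Quot S.idRel ⊕ Σ i : ι, {t : ℕ // 0 < t ∧ t < S.len i}

/-- The vertex corresponding to an exterior vertex. -/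
def ext (S : PathSys E ι) (a : E) : S.Vert := Sum.inl (Quot.mk _ a)

/-- The `t`-th vertex on the path named `i` (for `0 ≤ t ≤ S.len i`). -/
def pt (S : PathSys E ι) (i : ι) (t : ℕ) : S.Vert :=
  if h : 0 < t ∧ t < S.len i then Sum.inr ⟨i, t, h⟩
  else if t = 0 then S.ext (S.src i) else S.ext (S.dst i)

/-- The glued graph: consecutive vertices on each path are adjacent. -/
def graph (S : PathSys E ι) : SimpleGraph S.Vert :=
  SimpleGraph.fromRel fun a b =>
    ∃ i t, t + 1 ≤ S.len i ∧ a = S.pt i t ∧ b = S.pt i (t + 1)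

/-- The set of vertices lying on the path named `i`. -/
def onPath (S : PathSys E ι) (i : ι) : Set S.Vert :=
  {v | ∃ t ≤ S.len i, v = S.pt i t}

/-- A walk in the glued graph contains the path named `i` entirely if all vertices of
that path occur consecutively (in forward or backward order) on the walk. -/
def WalkContainsPath (S : PathSys E ι) {x y : S.Vert} (W : S.graph.Walk x y) (i : ι) : Prop :=
  ∃ a, a + S.len i ≤ W.length ∧
    ((∀ t ≤ S.len i, W.getVert (a + t) = S.pt i t) ∨
     (∀ t ≤ S.len i, W.getVert (a + t) = S.pt i (S.len i - t)))

end PathSys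

/-- The exterior vertices of the graph `G_{L,R,ℓ,p,q}`. -/
inductive Ext (n d : ℕ) : Type
  | uL : Fin n → Ext n d
  | uR : Fin n → Ext n d
  | vL : Fin n → Ext n d
  | vR : Fin n → Ext n d
  | wL : Fin d → Ext n d
  | wR : Fin d → Ext n d
  | xL : Ext n d
  | xR : Ext n d
  | yL : Ext n d
  | yR : Ext n d

/-- Names for the paths of the graph `G_{L,R,ℓ,p,q}`. -/
inductive Idx (n d : ℕ) (l r : Fin n → Fin d → Fin 2) : Type
  | uvL : Fin n → Idx n d l r
  | uvR : Fin n → Idx n d l r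
  | vxL : Fin n → Idx n d l r
  | vxR : Fin n → Idx n d l r
  | vwL : (i : Fin n) → (k : Fin d) → l i k = 1 → Idx n d l r
  | vwR : (j : Fin n) → (k : Fin d) → r j k = 1 → Idx n d l r
  | ywL : Fin d → Idx n d l r
  | ywR : Fin d → Idx n d l r
  | ww : Fin d → Idx n d l r
  | xyL : Idx n d l r
  | xyR : Idx n d l r
  | yy : Idx n d l r

/-- The path system defining the graph `G_{L,R,ℓ,p,q}`. -/
def sys (n d : ℕ) (l r : Fin n → Fin d → Fin 2) (ℓ p q : ℕ) :
    PathSys (Ext n d) (Idx n d l r) where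
  src := fun i => match i with
    | .uvL i => .uL i
    | .uvR i => .uR i
    | .vxL i => .vL i
    | .vxR i => .vR i
    | .vwL i _ _ => .vL i
    | .vwR j _ _ => .vR j
    | .ywL _ => .yL
    | .ywR _ => .yR
    | .ww k => .wL k
    | .xyL => .xL
    | .xyR => .xR
    | .yy => .yL
  dst := fun i => match i with
    | .uvL i => .vL i
    | .uvR i => .vR i
    | .vxL _ => .xL
    | .vxR _ => .xR
    | .vwL _ k _ => .wL k
    | .vwR _ k _ => .wR k
    | .ywL k => .wL k
    | .ywR k => .wR k
    | .ww k => .wR k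
    | .xyL => .yL
    | .xyR => .yR
    | .yy => .yR
  len := fun i => match i with
    | .uvL _ => ℓ - p
    | .uvR _ => ℓ - p
    | .vxL _ => ℓ
    | .vxR _ => ℓ
    | .vwL _ _ _ => ℓ
    | .vwR _ _ _ => ℓ
    | .ywL _ => ℓ
    | .ywR _ => ℓ
    | .ww _ => q
    | .xyL => ℓ - p
    | .xyR => ℓ - p
    | .yy => p + q

/-- The set `P_i^L`. -/
def PL (n d : ℕ) (l r : Fin n → Fin d → Fin 2) (ℓ p q : ℕ) (i : Fin n) :
    Set (sys n d l r ℓ p q).Vert :=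
  (sys n d l r ℓ p q).onPath (.uvL i) ∪
    ((sys n d l r ℓ p q).onPath (.vxL i) \ {(sys n d l r ℓ p q).ext .xL}) ∪
    ⋃ (k : Fin d) (h : l i k = 1),
      ((sys n d l r ℓ p q).onPath (.vwL i k h) \ {(sys n d l r ℓ p q).ext (.wL k)})

/-- The set `P_j^R`. -/
def PR (n d : ℕ) (l r : Fin n → Fin d → Fin 2) (ℓ p q : ℕ) (j : Fin n) :
    Set (sys n d l r ℓ p q).Vert :=
  (sys n d l r ℓ p q).onPath (.uvR j) ∪
    ((sys n d l r ℓ p q).onPath (.vxR j) \ {(sys n d l r ℓ p q).ext .xR}) ∪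
    ⋃ (k : Fin d) (h : r j k = 1),
      ((sys n d l r ℓ p q).onPath (.vwR j k h) \ {(sys n d l r ℓ p q).ext (.wR k)})

/-- The set `V^L`. -/
def VL (n d : ℕ) (l r : Fin n → Fin d → Fin 2) (ℓ p q : ℕ) :
    Set (sys n d l r ℓ p q).Vert := ⋃ i : Fin n, PL n d l r ℓ p q i

/-- The set `V^R`. -/
def VR (n d : ℕ) (l r : Fin n → Fin d → Fin 2) (ℓ p q : ℕ) :
    Set (sys n d l r ℓ p q).Vert := ⋃ j : Fin n, PR n d l r ℓ p q j

/-- The set `V^M` of all remaining vertices. -/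
def VM (n d : ℕ) (l r : Fin n → Fin d → Fin 2) (ℓ p q : ℕ) :
    Set (sys n d l r ℓ p q).Vert := (VL n d l r ℓ p q ∪ VR n d l r ℓ p q)ᶜ

/-!
Every vertex of `G` either lies within `ℓ - p` of some `v_i^L` or `v_j^R`, or is central: within
`2ℓ - p + q` of both `x^L` and `x^R`, with these two distances summing to at most `4ℓ - 2p + q`.
Two vertices of the first kind are joined through their `v`'s, which are `2ℓ` apart on the same side
and, as no pair is orthogonal, at most `2ℓ + q` apart on opposite sides. A vertex of the first kind
is within `2ℓ - p` of the `x` on its side, hence within `4ℓ - 2p + q` of every central vertex. For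
two central vertices the routes through `x^L` and through `x^R` have total length at most
`2(4ℓ - 2p + q)`, so one of them is short enough.

For the lower bound, a function on the exterior vertices that changes by at most the length of each
path extends to a `1`-Lipschitz function on `G`; one such function is `0` at `u_i^L` and
`4ℓ - 2p + q` at `u_j^R`.
-/

section Distance

variable {V : Type*} {G : SimpleGraph V}

theorem diam_eq_of_forall_dist_le (hG : G.Connected) {m : ℕ} (hle : ∀ a b, G.dist a b ≤ m)
    {u v : V} (huv : m ≤ G.dist u v) : G.diam = m := by
  have hediam : G.ediam ≤ m := SimpleGraph.ediam_le_of_edist_le fun a b ↦ by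
    rw [← (hG a b).coe_dist_eq_edist]
    exact_mod_cast hle a b
  have hfinite : G.ediam ≠ ⊤ := ne_top_of_le_ne_top (ENat.natCast_ne_top m) hediam
  exact le_antisymm (ENat.toNat_le_of_le_natCast hediam)
    (huv.trans (SimpleGraph.dist_le_diam hfinite))

theorem le_add_length_of_adj {f : V → ℕ} (hf : ∀ a b, G.Adj a b → f b ≤ f a + 1) {a b : V}
    (w : G.Walk a b) : f b ≤ f a + w.length := by
  induction w with
  | nil => simp
  | cons hadj w ih =>
    have := hf _ _ hadj
    rw [SimpleGraph.Walk.length_cons]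
    omega

end Distance

namespace PathSys

variable {E ι : Type} (S : PathSys E ι)

theorem pt_zero (i : ι) : S.pt i 0 = S.ext (S.src i) := by
  simp [pt]

theorem pt_len (i : ι) : S.pt i (S.len i) = S.ext (S.dst i) := by
  by_cases h : S.len i = 0
  · rw [h, pt_zero]
    exact congrArg Sum.inl (Quot.sound ⟨i, h, rfl, rfl⟩)
  · simp [pt, h]

theorem pt_of_pos_of_lt {i : ι} {t : ℕ} (h : 0 < t ∧ t < S.len i) :
    S.pt i t = Sum.inr ⟨i, t, h⟩ :=
  dif_pos h

theorem ext_src_mem_onPath (i : ι) : S.ext (S.src i) ∈ S.onPath i :=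
  ⟨0, Nat.zero_le _, (S.pt_zero i).symm⟩

theorem ext_dst_mem_onPath (i : ι) : S.ext (S.dst i) ∈ S.onPath i :=
  ⟨S.len i, le_rfl, (S.pt_len i).symm⟩

theorem inr_mem_onPath (i : ι) (t : {t : ℕ // 0 < t ∧ t < S.len i}) :
    (Sum.inr ⟨i, t⟩ : S.Vert) ∈ S.onPath i :=
  ⟨t, t.2.2.le, (S.pt_of_pos_of_lt t.2).symm⟩

theorem exists_mem_onPath (hS : ∀ a, ∃ i, S.src i = a ∨ S.dst i = a) (z : S.Vert) :
    ∃ i, z ∈ S.onPath i := by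
  rcases z with ⟨⟨a⟩⟩ | ⟨i, t⟩
  · obtain ⟨i, rfl | rfl⟩ := hS a
    exacts [⟨i, S.ext_src_mem_onPath i⟩, ⟨i, S.ext_dst_mem_onPath i⟩]
  · exact ⟨i, S.inr_mem_onPath i t⟩

theorem edist_pt_succ_le_one {i : ι} {t : ℕ} (ht : t + 1 ≤ S.len i) :
    S.graph.edist (S.pt i t) (S.pt i (t + 1)) ≤ 1 := by
  rw [SimpleGraph.edist_le_one_iff_adj_or_eq, graph, SimpleGraph.fromRel_adj]
  by_cases heq : S.pt i t = S.pt i (t + 1)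
  exacts [.inr heq, .inl ⟨heq, .inl ⟨i, t, ht, rfl, rfl⟩⟩]

theorem edist_pt_add_le {i : ι} {s m : ℕ} (h : s + m ≤ S.len i) :
    S.graph.edist (S.pt i s) (S.pt i (s + m)) ≤ m := by
  induction m with
  | zero => simp
  | succ m ih =>
    calc S.graph.edist (S.pt i s) (S.pt i (s + (m + 1)))
        ≤ S.graph.edist (S.pt i s) (S.pt i (s + m)) +
            S.graph.edist (S.pt i (s + m)) (S.pt i (s + m + 1)) := SimpleGraph.edist_triangle
      _ ≤ m + 1 := add_le_add (ih (by omega)) (S.edist_pt_succ_le_one h)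
      _ = (m + 1 : ℕ) := by push_cast; rfl

theorem dist_pt_add_le {i : ι} {s m : ℕ} (h : s + m ≤ S.len i) :
    S.graph.dist (S.pt i s) (S.pt i (s + m)) ≤ m :=
  ENat.toNat_le_of_le_natCast (S.edist_pt_add_le h)

variable {S}

theorem dist_src_add_dist_dst_le {i : ι} {z : S.Vert} (hz : z ∈ S.onPath i) :
    S.graph.dist z (S.ext (S.src i)) + S.graph.dist z (S.ext (S.dst i)) ≤ S.len i := by
  obtain ⟨t, ht, rfl⟩ := hz
  have hsrc := S.dist_pt_add_le (i := i) (s := 0) (m := t) (by omega)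
  have hdst := S.dist_pt_add_le (i := i) (s := t) (m := S.len i - t) (by omega)
  rw [pt_zero, Nat.zero_add, SimpleGraph.dist_comm] at hsrc
  rw [Nat.add_sub_cancel' ht, pt_len] at hdst
  omega

theorem dist_src_dst_le (S : PathSys E ι) (i : ι) :
    S.graph.dist (S.ext (S.src i)) (S.ext (S.dst i)) ≤ S.len i :=
  le_of_add_le_right (dist_src_add_dist_dst_le (S.ext_src_mem_onPath i))

theorem dist_dst_src_le (S : PathSys E ι) (i : ι) :
    S.graph.dist (S.ext (S.dst i)) (S.ext (S.src i)) ≤ S.len i :=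
  SimpleGraph.dist_comm.trans_le (S.dist_src_dst_le i)

theorem reachable_src {i : ι} {z : S.Vert} (hz : z ∈ S.onPath i) :
    S.graph.Reachable (S.ext (S.src i)) z := by
  obtain ⟨t, ht, rfl⟩ := hz
  have h := S.edist_pt_add_le (i := i) (s := 0) (m := t) (by omega)
  rw [pt_zero, Nat.zero_add] at h
  exact SimpleGraph.reachable_of_edist_ne_top (ne_top_of_le_ne_top (ENat.natCast_ne_top t) h)

theorem reachable_src_dst (S : PathSys E ι) (i : ι) :
    S.graph.Reachable (S.ext (S.src i)) (S.ext (S.dst i)) :=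
  reachable_src (S.ext_dst_mem_onPath i)

theorem connected_of_forall_reachable_ext (c : E)
    (hc : ∀ a, S.graph.Reachable (S.ext a) (S.ext c)) : S.graph.Connected := by
  have hreach : ∀ z, S.graph.Reachable z (S.ext c) := by
    rintro (⟨⟨a⟩⟩ | ⟨i, t⟩)
    · exact hc a
    · exact (reachable_src (S.inr_mem_onPath i t)).symm.trans (hc _)
  have : Nonempty S.Vert := ⟨S.ext c⟩
  exact ⟨fun a b ↦ (hreach a).trans (hreach b).symm⟩

/-- A function on the exterior vertices is *Lipschitz* if along each path it changes by at most
the length of that path. -/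
def IsLipschitz (S : PathSys E ι) (g : E → ℕ) : Prop :=
  ∀ i, g (S.src i) ≤ g (S.dst i) + S.len i ∧ g (S.dst i) ≤ g (S.src i) + S.len i

/-- The largest extension of a Lipschitz function on the exterior vertices to a `1`-Lipschitz
function on the vertices of the glued graph (the McShane extension). -/
def IsLipschitz.extend {g : E → ℕ} (hg : S.IsLipschitz g) : S.Vert → ℕ
  | .inl a => Quot.lift g (by rintro _ _ ⟨i, hi, rfl, rfl⟩; have := hg i; omega) a
  | .inr ⟨i, t⟩ => min (g (S.src i) + t) (g (S.dst i) + (S.len i - t))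

namespace IsLipschitz

variable {g : E → ℕ} (hg : S.IsLipschitz g)

theorem extend_ext (a : E) : hg.extend (S.ext a) = g a := rfl

theorem extend_pt {i : ι} {t : ℕ} (ht : t ≤ S.len i) :
    hg.extend (S.pt i t) = min (g (S.src i) + t) (g (S.dst i) + (S.len i - t)) := by
  have := hg i
  rcases Nat.eq_zero_or_pos t with rfl | hpos
  · rw [pt_zero, extend_ext]
    omega
  rcases ht.eq_or_lt with rfl | hlt
  · rw [pt_len, extend_ext]
    omega
  · rw [S.pt_of_pos_of_lt ⟨hpos, hlt⟩]
    rfl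

theorem extend_le_of_adj (a b : S.Vert) (hab : S.graph.Adj a b) :
    hg.extend b ≤ hg.extend a + 1 := by
  rw [graph, SimpleGraph.fromRel_adj] at hab
  rcases hab.2 with ⟨i, t, ht, rfl, rfl⟩ | ⟨i, t, ht, rfl, rfl⟩ <;>
  · rw [hg.extend_pt ht, hg.extend_pt (Nat.le_of_succ_le ht)]
    omega

include hg in
theorem le_add_dist {a b : E} (hab : S.graph.Reachable (S.ext a) (S.ext b)) :
    g b ≤ g a + S.graph.dist (S.ext a) (S.ext b) := by
  obtain ⟨w, hw⟩ := hab.exists_walk_length_eq_dist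
  rw [← hw, ← hg.extend_ext a, ← hg.extend_ext b]
  exact le_add_length_of_adj hg.extend_le_of_adj w

end IsLipschitz

end PathSys

/-- The two halves of the construction, indexed in the paper by the superscripts `L` and `R`. -/
inductive Side
  | left
  | right

/-- The opposite half. -/
def Side.opp : Side → Side
  | .left => .right
  | .right => .left

/-- The metric facts about `G_{L,R,ℓ,p,q}` behind the upper bound on its diameter, for the families
of vertices `v`, `w`, `x`, `y` of a connected graph. The non-orthogonality of the bit vectors enters
only through `dist_v_v_opp`. -/
structure Frame {V : Type*} (G : SimpleGraph V) (ι κ : Type*) (ℓ p q : ℕ) where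
  v : Side → ι → V
  w : Side → κ → V
  x : Side → V
  y : Side → V
  connected : G.Connected
  dist_v_x : ∀ s i, G.dist (v s i) (x s) ≤ ℓ
  dist_w_y : ∀ s k, G.dist (w s k) (y s) ≤ ℓ
  dist_y_x : ∀ s, G.dist (y s) (x s) ≤ ℓ - p
  dist_w_w_opp : ∀ s k, G.dist (w s k) (w s.opp k) ≤ q
  dist_y_y_opp : ∀ s, G.dist (y s) (y s.opp) ≤ p + q
  dist_v_v_opp : ∀ s i j, G.dist (v s i) (v s.opp j) ≤ 2 * ℓ + q

namespace Frame

variable {V ι κ : Type*} {G : SimpleGraph V} {ℓ p q : ℕ} (F : Frame G ι κ ℓ p q)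

/-- A vertex close to `v s i`; contains the set `P_i^L` or `P_i^R` of the paper. -/
def IsNear (s : Side) (i : ι) (z : V) : Prop :=
  G.dist z (F.v s i) ≤ ℓ - p

/-- A vertex that is close to both `x^L` and `x^R`, and even closer on average; all vertices of the
set `V^M` of the paper are central. -/
def IsCentral (z : V) : Prop :=
  (∀ s, G.dist z (F.x s) ≤ 2 * ℓ - p + q) ∧
    G.dist z (F.x .left) + G.dist z (F.x .right) ≤ 2 * (2 * ℓ - p) + q

variable {F}

theorem isCentral_of_dist_le {z : V} (s : Side) (hs : G.dist z (F.x s) ≤ 2 * ℓ - p)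
    (hopp : G.dist z (F.x s.opp) ≤ 2 * ℓ - p + q) : F.IsCentral z := by
  constructor
  · rintro (_ | _) <;> cases s <;> simp only [Side.opp] at hopp <;> omega
  · cases s <;> simp only [Side.opp] at hopp <;> omega

variable (F)

theorem dist_w_x_le (hpℓ : p ≤ ℓ) (s : Side) (k : κ) :
    G.dist (F.w s k) (F.x s) ≤ 2 * ℓ - p := by
  have := F.connected.dist_triangle (u := F.w s k) (v := F.y s) (w := F.x s)
  have := F.dist_w_y s k
  have := F.dist_y_x s
  omega

theorem dist_w_x_opp_le (hpℓ : p ≤ ℓ) (s : Side) (k : κ) :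
    G.dist (F.w s k) (F.x s.opp) ≤ 2 * ℓ - p + q := by
  have := F.connected.dist_triangle (u := F.w s k) (v := F.w s.opp k) (w := F.x s.opp)
  have := F.dist_w_w_opp s k
  have := F.dist_w_x_le hpℓ s.opp k
  omega

theorem dist_y_x_opp_le (hpℓ : p ≤ ℓ) (s : Side) :
    G.dist (F.y s) (F.x s.opp) ≤ ℓ + q := by
  have := F.connected.dist_triangle (u := F.y s) (v := F.y s.opp) (w := F.x s.opp)
  have := F.dist_y_y_opp s
  have := F.dist_y_x s.opp
  omega

theorem dist_x_x_opp_le (hpℓ : p ≤ ℓ) (s : Side) :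
    G.dist (F.x s) (F.x s.opp) ≤ 2 * ℓ - p + q := by
  have := F.connected.dist_triangle (u := F.x s) (v := F.y s) (w := F.x s.opp)
  have := G.dist_comm (u := F.x s) (v := F.y s)
  have := F.dist_y_x s
  have := F.dist_y_x_opp_le hpℓ s
  omega

theorem dist_v_v_le (s t : Side) (i j : ι) :
    G.dist (F.v s i) (F.v t j) ≤ 2 * ℓ + q := by
  have same : G.dist (F.v s i) (F.v s j) ≤ 2 * ℓ + q := by
    have := F.connected.dist_triangle (u := F.v s i) (v := F.x s) (w := F.v s j)
    have := G.dist_comm (u := F.x s) (v := F.v s j)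
    have := F.dist_v_x s i
    have := F.dist_v_x s j
    omega
  cases s <;> cases t
  exacts [same, F.dist_v_v_opp .left i j, F.dist_v_v_opp .right i j, same]

theorem isCentral_x (hpℓ : p ≤ ℓ) (s : Side) : F.IsCentral (F.x s) :=
  isCentral_of_dist_le s (by simp) (F.dist_x_x_opp_le hpℓ s)

theorem isCentral_w (hpℓ : p ≤ ℓ) (s : Side) (k : κ) : F.IsCentral (F.w s k) :=
  isCentral_of_dist_le s (F.dist_w_x_le hpℓ s k) (F.dist_w_x_opp_le hpℓ s k)

variable {F} {z z' : V}

-- As `p ≤ 1`, the only vertex of a path of length `ℓ` at distance more than `ℓ - p` from its start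
-- is its end.
theorem isNear_or_eq (hp : p ≤ 1) {s : Side} {i : ι} {c : V}
    (h : G.dist z (F.v s i) + G.dist z c ≤ ℓ) : F.IsNear s i z ∨ z = c := by
  rw [IsNear, ← F.connected.dist_eq_zero_iff (u := z)]
  omega

theorem isNear_or_isCentral_of_v_x (hpℓ : p ≤ ℓ) (hp : p ≤ 1) {s : Side} {i : ι}
    (h : G.dist z (F.v s i) + G.dist z (F.x s) ≤ ℓ) : F.IsNear s i z ∨ F.IsCentral z :=
  (isNear_or_eq hp h).imp_right (by rintro rfl; exact F.isCentral_x hpℓ s)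

theorem isNear_or_isCentral_of_v_w (hpℓ : p ≤ ℓ) (hp : p ≤ 1) {s : Side} {i : ι} {k : κ}
    (h : G.dist z (F.v s i) + G.dist z (F.w s k) ≤ ℓ) : F.IsNear s i z ∨ F.IsCentral z :=
  (isNear_or_eq hp h).imp_right (by rintro rfl; exact F.isCentral_w hpℓ s k)

theorem isCentral_of_y_w (hpℓ : p ≤ ℓ) (hp : p ≤ 1) {s : Side} {k : κ}
    (h : G.dist z (F.y s) + G.dist z (F.w s k) ≤ ℓ) : F.IsCentral z := by
  apply isCentral_of_dist_le s
  · have := F.connected.dist_triangle (u := z) (v := F.y s) (w := F.x s)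
    have := F.dist_y_x s
    omega
  · have := F.connected.dist_triangle (u := z) (v := F.y s) (w := F.x s.opp)
    have := F.connected.dist_triangle (u := z) (v := F.w s k) (w := F.x s.opp)
    have := F.dist_y_x_opp_le hpℓ s
    have := F.dist_w_x_opp_le hpℓ s k
    omega

theorem isCentral_of_x_y (hpℓ : p ≤ ℓ) {s : Side}
    (h : G.dist z (F.x s) + G.dist z (F.y s) ≤ ℓ - p) : F.IsCentral z := by
  apply isCentral_of_dist_le s
  · omega
  · have := F.connected.dist_triangle (u := z) (v := F.y s) (w := F.x s.opp)
    have := F.dist_y_x_opp_le hpℓ s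
    omega

theorem isCentral_of_w_w (hpℓ : p ≤ ℓ) {k : κ}
    (h : G.dist z (F.w .left k) + G.dist z (F.w .right k) ≤ q) : F.IsCentral z := by
  have via : ∀ s, G.dist z (F.x s) ≤ G.dist z (F.w s k) + (2 * ℓ - p) := fun s ↦
    F.connected.dist_triangle.trans (Nat.add_le_add_left (F.dist_w_x_le hpℓ s k) _)
  have := via .left
  have := via .right
  exact ⟨by rintro (_ | _) <;> omega, by omega⟩

theorem isCentral_of_y_y (hpℓ : p ≤ ℓ)
    (h : G.dist z (F.y .left) + G.dist z (F.y .right) ≤ p + q) : F.IsCentral z := by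
  have via : ∀ s, G.dist z (F.x s) ≤ G.dist z (F.y s) + (ℓ - p) := fun s ↦
    F.connected.dist_triangle.trans (Nat.add_le_add_left (F.dist_y_x s) _)
  have := via .left
  have := via .right
  exact ⟨by rintro (_ | _) <;> omega, by omega⟩

theorem dist_le_of_isNear_of_isNear (hpℓ : p ≤ ℓ) {s t : Side} {i j : ι}
    (h : F.IsNear s i z) (h' : F.IsNear t j z') : G.dist z z' ≤ 4 * ℓ - 2 * p + q := by
  have := F.connected.dist_triangle (u := z) (v := F.v s i) (w := z')
  have := F.connected.dist_triangle (u := F.v s i) (v := F.v t j) (w := z')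
  have := F.dist_v_v_le s t i j
  have := G.dist_comm (u := F.v t j) (v := z')
  rw [IsNear] at h h'
  omega

theorem dist_le_of_isNear_of_isCentral (hpℓ : p ≤ ℓ) {s : Side} {i : ι}
    (h : F.IsNear s i z) (h' : F.IsCentral z') : G.dist z z' ≤ 4 * ℓ - 2 * p + q := by
  have := F.connected.dist_triangle (u := z) (v := F.v s i) (w := z')
  have := F.connected.dist_triangle (u := F.v s i) (v := F.x s) (w := z')
  have := F.dist_v_x s i
  have := G.dist_comm (u := F.x s) (v := z')
  have := h'.1 s
  rw [IsNear] at h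
  omega

theorem dist_le_of_isCentral_of_isCentral (h : F.IsCentral z) (h' : F.IsCentral z') :
    G.dist z z' ≤ 4 * ℓ - 2 * p + q := by
  have via : ∀ s, G.dist z z' ≤ G.dist z (F.x s) + G.dist z' (F.x s) := fun s ↦ by
    rw [G.dist_comm (u := z')]
    exact F.connected.dist_triangle
  have := via .left
  have := via .right
  have := h.2
  have := h'.2
  omega

theorem dist_le (hpℓ : p ≤ ℓ) (hz : (∃ s i, F.IsNear s i z) ∨ F.IsCentral z)
    (hz' : (∃ s i, F.IsNear s i z') ∨ F.IsCentral z') : G.dist z z' ≤ 4 * ℓ - 2 * p + q := by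
  rcases hz with ⟨s, i, near⟩ | central <;> rcases hz' with ⟨t, j, near'⟩ | central'
  · exact dist_le_of_isNear_of_isNear hpℓ near near'
  · exact dist_le_of_isNear_of_isCentral hpℓ near central'
  · exact G.dist_comm ▸ dist_le_of_isNear_of_isCentral hpℓ near' central
  · exact dist_le_of_isCentral_of_isCentral central central'

end Frame

theorem exists_eq_one_of_not_orth {d : ℕ} {a b : Fin d → Fin 2} (h : ¬ Orth a b) :
    ∃ k, a k = 1 ∧ b k = 1 := by
  simp only [Orth, not_forall, not_or] at h
  exact h.imp fun k hk ↦ ⟨by omega, by omega⟩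

section System

open PathSys

variable {n d ℓ p q : ℕ} {l r : Fin n → Fin d → Fin 2}

theorem sys_exists_endpoint (a : Ext n d) :
    ∃ i, (sys n d l r ℓ p q).src i = a ∨ (sys n d l r ℓ p q).dst i = a := by
  cases a with
  | uL i => exact ⟨.uvL i, .inl rfl⟩
  | uR i => exact ⟨.uvR i, .inl rfl⟩
  | vL i => exact ⟨.vxL i, .inl rfl⟩
  | vR i => exact ⟨.vxR i, .inl rfl⟩
  | wL k => exact ⟨.ww k, .inl rfl⟩
  | wR k => exact ⟨.ww k, .inr rfl⟩
  | xL => exact ⟨.xyL, .inl rfl⟩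
  | xR => exact ⟨.xyR, .inl rfl⟩
  | yL => exact ⟨.yy, .inl rfl⟩
  | yR => exact ⟨.yy, .inr rfl⟩

theorem sys_connected : (sys n d l r ℓ p q).graph.Connected := by
  let S := sys n d l r ℓ p q
  have along : ∀ i, S.graph.Reachable (S.ext (S.src i)) (S.ext (S.dst i)) := S.reachable_src_dst
  have yR : S.graph.Reachable (S.ext .yR) (S.ext .yL) := (along .yy).symm
  have xL : S.graph.Reachable (S.ext .xL) (S.ext .yL) := along .xyL
  have xR : S.graph.Reachable (S.ext .xR) (S.ext .yL) := (along .xyR).trans yR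
  have vL : ∀ i, S.graph.Reachable (S.ext (.vL i)) (S.ext .yL) := fun i ↦ (along (.vxL i)).trans xL
  have vR : ∀ i, S.graph.Reachable (S.ext (.vR i)) (S.ext .yL) := fun i ↦ (along (.vxR i)).trans xR
  refine connected_of_forall_reachable_ext .yL fun a ↦ ?_
  cases a with
  | uL i => exact (along (.uvL i)).trans (vL i)
  | uR i => exact (along (.uvR i)).trans (vR i)
  | vL i => exact vL i
  | vR i => exact vR i
  | wL k => exact (along (.ywL k)).symm
  | wR k => exact (along (.ywR k)).symm.trans yR
  | xL => exact xL
  | xR => exact xR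
  | yL => exact .rfl
  | yR => exact yR

theorem sys_dist_vL_vR_le {i j : Fin n} (hij : ¬ Orth (l i) (r j)) :
    (sys n d l r ℓ p q).graph.dist ((sys n d l r ℓ p q).ext (.vL i))
      ((sys n d l r ℓ p q).ext (.vR j)) ≤ 2 * ℓ + q := by
  let S := sys n d l r ℓ p q
  obtain ⟨k, hl, hr⟩ := exists_eq_one_of_not_orth hij
  have hvwL : S.graph.dist (S.ext (.vL i)) (S.ext (.wL k)) ≤ ℓ :=
    S.dist_src_dst_le (.vwL i k hl)
  have hww : S.graph.dist (S.ext (.wL k)) (S.ext (.wR k)) ≤ q := S.dist_src_dst_le (.ww k)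
  have hwvR : S.graph.dist (S.ext (.wR k)) (S.ext (.vR j)) ≤ ℓ :=
    S.dist_dst_src_le (.vwR j k hr)
  calc S.graph.dist (S.ext (.vL i)) (S.ext (.vR j))
      ≤ S.graph.dist (S.ext (.vL i)) (S.ext (.wL k)) +
          (S.graph.dist (S.ext (.wL k)) (S.ext (.wR k)) +
            S.graph.dist (S.ext (.wR k)) (S.ext (.vR j))) :=
        sys_connected.dist_triangle.trans
          (Nat.add_le_add_left sys_connected.dist_triangle _)
    _ ≤ ℓ + (q + ℓ) := by gcongr
    _ = 2 * ℓ + q := by ring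

/-- The graph `G_{L,R,ℓ,p,q}` as an instance of `Frame`. -/
def frame (hno : ∀ i j, ¬ Orth (l i) (r j)) :
    Frame (sys n d l r ℓ p q).graph (Fin n) (Fin d) ℓ p q where
  v
    | .left, i => (sys n d l r ℓ p q).ext (.vL i)
    | .right, i => (sys n d l r ℓ p q).ext (.vR i)
  w
    | .left, k => (sys n d l r ℓ p q).ext (.wL k)
    | .right, k => (sys n d l r ℓ p q).ext (.wR k)
  x
    | .left => (sys n d l r ℓ p q).ext .xL
    | .right => (sys n d l r ℓ p q).ext .xR
  y
    | .left => (sys n d l r ℓ p q).ext .yL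
    | .right => (sys n d l r ℓ p q).ext .yR
  connected := sys_connected
  dist_v_x
    | .left, i => (sys n d l r ℓ p q).dist_src_dst_le (.vxL i)
    | .right, i => (sys n d l r ℓ p q).dist_src_dst_le (.vxR i)
  dist_w_y
    | .left, k => (sys n d l r ℓ p q).dist_dst_src_le (.ywL k)
    | .right, k => (sys n d l r ℓ p q).dist_dst_src_le (.ywR k)
  dist_y_x
    | .left => (sys n d l r ℓ p q).dist_dst_src_le .xyL
    | .right => (sys n d l r ℓ p q).dist_dst_src_le .xyR
  dist_w_w_opp
    | .left, k => (sys n d l r ℓ p q).dist_src_dst_le (.ww k)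
    | .right, k => (sys n d l r ℓ p q).dist_dst_src_le (.ww k)
  dist_y_y_opp
    | .left => (sys n d l r ℓ p q).dist_src_dst_le .yy
    | .right => (sys n d l r ℓ p q).dist_dst_src_le .yy
  dist_v_v_opp
    | .left, i, j => sys_dist_vL_vR_le (hno i j)
    | .right, i, j => SimpleGraph.dist_comm.trans_le (sys_dist_vL_vR_le (hno j i))

theorem isNear_or_isCentral (hpℓ : p ≤ ℓ) (hp : p ≤ 1) (hno : ∀ i j, ¬ Orth (l i) (r j))
    (z : (sys n d l r ℓ p q).Vert) :
    (∃ s i, (frame hno).IsNear s i z) ∨ (frame hno).IsCentral z := by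
  obtain ⟨path, hz⟩ := exists_mem_onPath _ sys_exists_endpoint z
  have h := dist_src_add_dist_dst_le hz
  have near_or {s : Side} {i : Fin n} (h : (frame hno).IsNear s i z ∨ (frame hno).IsCentral z) :
      (∃ s i, (frame hno).IsNear s i z) ∨ (frame hno).IsCentral z :=
    h.imp_left fun near ↦ ⟨s, i, near⟩
  cases path with
  | uvL i => exact .inl ⟨.left, i, le_of_add_le_right h⟩
  | uvR i => exact .inl ⟨.right, i, le_of_add_le_right h⟩
  | vxL i => exact near_or (Frame.isNear_or_isCentral_of_v_x (s := .left) hpℓ hp h)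
  | vxR i => exact near_or (Frame.isNear_or_isCentral_of_v_x (s := .right) hpℓ hp h)
  | vwL i k _ => exact near_or (Frame.isNear_or_isCentral_of_v_w (s := .left) hpℓ hp h)
  | vwR i k _ => exact near_or (Frame.isNear_or_isCentral_of_v_w (s := .right) hpℓ hp h)
  | ywL k => exact .inr (Frame.isCentral_of_y_w (s := .left) hpℓ hp h)
  | ywR k => exact .inr (Frame.isCentral_of_y_w (s := .right) hpℓ hp h)
  | ww k => exact .inr (Frame.isCentral_of_w_w hpℓ h)
  | xyL => exact .inr (Frame.isCentral_of_x_y (s := .left) hpℓ h)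
  | xyR => exact .inr (Frame.isCentral_of_x_y (s := .right) hpℓ h)
  | yy => exact .inr (Frame.isCentral_of_y_y hpℓ h)

/-- The potential of the lower bound: on the left half, the distance from the vertices `u_i^L`
capped at `2ℓ - p`; on the right half, its mirror image subtracted from `4ℓ - 2p + q`. -/
def potential (n d ℓ p q : ℕ) : Ext n d → ℕ
  | .uL _ => 0
  | .vL _ => ℓ - p
  | .wL _ | .xL | .yL => 2 * ℓ - p
  | .wR _ | .xR | .yR => 2 * ℓ - p + q
  | .vR _ => 3 * ℓ - p + q
  | .uR _ => 4 * ℓ - 2 * p + q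

theorem isLipschitz_potential (hpℓ : p ≤ ℓ) :
    (sys n d l r ℓ p q).IsLipschitz (potential n d ℓ p q) := by
  intro i
  cases i <;> simp only [sys, potential] <;> omega

theorem sys_le_dist_uL_uR (hpℓ : p ≤ ℓ) (i j : Fin n) :
    4 * ℓ - 2 * p + q ≤ (sys n d l r ℓ p q).graph.dist ((sys n d l r ℓ p q).ext (.uL i))
      ((sys n d l r ℓ p q).ext (.uR j)) := by
  have h := (isLipschitz_potential (l := l) (r := r) (q := q) hpℓ).le_add_dist
    (sys_connected (PathSys.ext _ (.uL i)) (PathSys.ext _ (.uR j)))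
  simpa only [potential, Nat.zero_add] using h

end System

theorem diameter_of_G_no_orth_pair (n d ℓ p q : ℕ) (hn : 1 ≤ n) (hd : 1 ≤ d)
    (hℓ : 1 ≤ ℓ) (hp : p ≤ 1) (l r : Fin n → Fin d → Fin 2)
    (hno : ∀ i j, ¬ Orth (l i) (r j)) :
    (sys n d l r ℓ p q).graph.diam = 4 * ℓ - 2 * p + q := by
  have hpℓ : p ≤ ℓ := hp.trans hℓ
  exact diam_eq_of_forall_dist_le sys_connected
    (fun a b ↦ Frame.dist_le hpℓ (isNear_or_isCentral hpℓ hp hno a)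
      (isNear_or_isCentral hpℓ hp hno b))
    (sys_le_dist_uL_uR hpℓ ⟨0, hn⟩ ⟨0, hn⟩)

end GraphOV
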